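/- Let V ⊆ E ⊂ R[x] be finite-dimensional vector spaces connected to 1 with V⁺ ⊆ E, and let Λ be a linear form on span(E·E). Assume rank H_Λ^E = rank H_Λ^V = dim V. Then there exists a unique linear form Λ̃ on R[x] which extends Λ (i.e., Λ̃(p) = Λ(p) for all p ∈ span(E·E)) and satisfies rank H_{Λ̃} = rank H_Λ^E, where H_{Λ̃} : R[x] → R[x]* is the (full) Hankel operator H_{Λ̃}(p)(q) = Λ̃(pq). Moreover, ker H_{Λ̃} equals the ideal of R[x] generated by ker H_Λ^E. -/

import Mathlib

open MvPolynomial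

noncomputable section

/-- `R[x] = ℝ[x₁,…,xₙ]`. -/
abbrev PolyR (n : ℕ) := MvPolynomial (Fin n) ℝ

/-- `span(E·E)`, the linear span of products of pairs of elements of `E`. -/
def spanEE {n : ℕ} (E : Submodule ℝ (PolyR n)) : Submodule ℝ (PolyR n) :=
  Submodule.span ℝ (Set.image2 (· * ·) (E : Set (PolyR n)) (E : Set (PolyR n)))

lemma mul_mem_spanEE {n : ℕ} {E : Submodule ℝ (PolyR n)} :
    ∀ p q : PolyR n, p ∈ E → q ∈ E → p * q ∈ spanEE E :=
  fun _ _ hp hq => Submodule.subset_span (Set.mem_image2_of_mem hp hq)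

lemma spanEE_mono {n : ℕ} {E E' : Submodule ℝ (PolyR n)} (h : E ≤ E') :
    spanEE E ≤ spanEE E' :=
  Submodule.span_mono (Set.image2_subset h h)

/-- Finite sums of squares of elements of `E`. -/
def SoS {n : ℕ} (E : Submodule ℝ (PolyR n)) : Set (PolyR n) :=
  (AddSubmonoid.closure ((fun q => q ^ 2) '' (E : Set (PolyR n))) : Set (PolyR n))

/-- The truncated quadratic module `Q_{E,G}` for the constraints `G = (G0, G1)`. -/
def QMod {n : ℕ} (E : Submodule ℝ (PolyR n)) (G0 G1 : Set (PolyR n)) : Set (PolyR n) :=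
  { p | ∃ (s0 s1 : Finset (PolyR n)) (h h' : PolyR n → PolyR n),
      ↑s0 ⊆ G0 ∧ ↑s1 ⊆ G1 ∧
      (∀ g ∈ s0, h g ∈ E ∧ g * h g ∈ spanEE E) ∧
      (∀ g ∈ s1, h' g ∈ SoS E ∧ g * h' g ∈ spanEE E) ∧
      p = (∑ g ∈ s0, g * h g) + ∑ g ∈ s1, g * h' g }

/-- The dual convex set `L_{E,G}` of linear forms on `span(E·E)`. -/
def LSet {n : ℕ} (E : Submodule ℝ (PolyR n)) (G0 G1 : Set (PolyR n)) :
    Set (↥(spanEE E) →ₗ[ℝ] ℝ) :=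
  { Λ | (∀ q : ↥(spanEE E), (q : PolyR n) ∈ QMod E G0 G1 → 0 ≤ Λ q) ∧
        ∀ q : ↥(spanEE E), (q : PolyR n) = 1 → Λ q = 1 }

/-- `f^μ_{E,G}`, as an extended real (so that it is `+∞` when `L_{E,G} = ∅`). -/
def fmu {n : ℕ} (E : Submodule ℝ (PolyR n)) (G0 G1 : Set (PolyR n))
    (f : ↥(spanEE E)) : EReal :=
  sInf ((fun Λ : ↥(spanEE E) →ₗ[ℝ] ℝ => ((Λ f : ℝ) : EReal)) '' LSet E G0 G1)

/-- `f^sos_{E,G}`, as an extended real (so that it is `-∞` when the set is empty). -/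
def fsos {n : ℕ} (E : Submodule ℝ (PolyR n)) (G0 G1 : Set (PolyR n)) (f : PolyR n) : EReal :=
  sSup ((fun γ : ℝ => (γ : EReal)) '' { γ : ℝ | f - C γ ∈ QMod E G0 G1 })

/-- The basic semialgebraic set `S(G)`. -/
def SemiSet {n : ℕ} (G0 G1 : Set (PolyR n)) : Set (Fin n → ℝ) :=
  { x | (∀ g ∈ G0, eval x g = 0) ∧ ∀ g ∈ G1, 0 ≤ eval x g }

/-- The truncated Hankel operator `H_Λ^E : E → E*`, `H_Λ^E(p)(q) = Λ(pq)`, for a linear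
form `Λ` defined on a space `W` containing all products of pairs of elements of `E`. -/
def Hankel {n : ℕ} (W E : Submodule ℝ (PolyR n)) (Λ : ↥W →ₗ[ℝ] ℝ)
    (h : ∀ p q : PolyR n, p ∈ E → q ∈ E → p * q ∈ W) :
    ↥E →ₗ[ℝ] Module.Dual ℝ ↥E :=
  LinearMap.mk₂ ℝ (fun p q : ↥E => Λ ⟨(p : PolyR n) * q, h _ _ p.2 q.2⟩)
    (fun p p' q => by
      rw [← map_add]; exact congrArg Λ (Subtype.ext (by simp [add_mul])))
    (fun c p q => by
      rw [← map_smul]; exact congrArg Λ (Subtype.ext (by simp [smul_mul_assoc])))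
    (fun p q q' => by
      rw [← map_add]; exact congrArg Λ (Subtype.ext (by simp [mul_add])))
    (fun c p q => by
      rw [← map_smul]; exact congrArg Λ (Subtype.ext (by simp [mul_smul_comm])))

/-- The kernel of the truncated Hankel operator, as a subspace of `R[x]`. -/
def HKer {n : ℕ} (W E : Submodule ℝ (PolyR n)) (Λ : ↥W →ₗ[ℝ] ℝ)
    (h : ∀ p q : PolyR n, p ∈ E → q ∈ E → p * q ∈ W) : Submodule ℝ (PolyR n) :=
  (LinearMap.ker (Hankel W E Λ h)).map E.subtype

/-- The rank of the truncated Hankel operator. -/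
def HRank {n : ℕ} (W E : Submodule ℝ (PolyR n)) (Λ : ↥W →ₗ[ℝ] ℝ)
    (h : ∀ p q : PolyR n, p ∈ E → q ∈ E → p * q ∈ W) : Cardinal :=
  Module.rank ℝ ↥(LinearMap.range (Hankel W E Λ h))

/-- The full Hankel operator `H_Λ : R[x] → R[x]*` of a linear form on `R[x]`. -/
def FullHankel {n : ℕ} (Λ : PolyR n →ₗ[ℝ] ℝ) :
    PolyR n →ₗ[ℝ] Module.Dual ℝ (PolyR n) :=
  LinearMap.compr₂ (LinearMap.mul ℝ (PolyR n)) Λ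

/-- The prolongation `E⁺ = E + x₁E + … + xₙE`. -/
def prolong {n : ℕ} (E : Submodule ℝ (PolyR n)) : Submodule ℝ (PolyR n) :=
  E ⊔ ⨆ i : Fin n, Submodule.map (LinearMap.mulLeft ℝ (X i : PolyR n)) E

/-- A subspace `E` is connected to 1. -/
def ConnectedTo1 {n : ℕ} (E : Submodule ℝ (PolyR n)) : Prop :=
  (1 : PolyR n) ∈ E ∧ ∃ (k : ℕ) (c : ℕ → Submodule ℝ (PolyR n)),
    c 0 = Submodule.span ℝ {1} ∧ c k = E ∧
    ∀ i < k, c i ≤ c (i + 1) ∧ c (i + 1) ≤ prolong (c i)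

/-- Degree `|α|` of an exponent vector. -/
def degOf {n : ℕ} (α : Fin n →₀ ℕ) : ℕ := α.sum fun _ e => e

/-- `B⁺ = B ∪ x₁B ∪ … ∪ xₙB` for a set of monomials (exponent vectors). -/
def Bplus {n : ℕ} (B : Set (Fin n →₀ ℕ)) : Set (Fin n →₀ ℕ) :=
  B ∪ ⋃ i : Fin n, (fun α => α + Finsupp.single i 1) '' B

/-- The border `∂B = B⁺ \ B`. -/
def BBorder {n : ℕ} (B : Set (Fin n →₀ ℕ)) : Set (Fin n →₀ ℕ) :=
  Bplus B \ B

/-- A set of monomials connected to 1. -/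
def MonConnectedTo1 {n : ℕ} (B : Set (Fin n →₀ ℕ)) : Prop :=
  0 ∈ B ∧ ∀ α ∈ B, α ≠ 0 → ∃ i : Fin n, ∃ β ∈ B, α = β + Finsupp.single i 1

/-- `⟨B⟩_t`: the span of the monomials of `B` of degree at most `t`. -/
def spanB {n : ℕ} (B : Set (Fin n →₀ ℕ)) (t : ℕ) : Submodule ℝ (PolyR n) :=
  Submodule.span ℝ ((fun α => (monomial α (1 : ℝ) : PolyR n)) '' { α ∈ B | degOf α ≤ t })

/-- `⟨F|t⟩`: the span of `{ x^α f : f ∈ F, deg f ≤ t, |α| ≤ t − deg f }`. -/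
def FSpan {n : ℕ} (F : Finset (PolyR n)) (t : ℕ) : Submodule ℝ (PolyR n) :=
  Submodule.span ℝ { p : PolyR n | ∃ f ∈ F, ∃ α : Fin n →₀ ℕ,
    f.totalDegree ≤ t ∧ degOf α + f.totalDegree ≤ t ∧ p = monomial α (1 : ℝ) * f }

/-- `F` is a border basis for `B` in degree `t`. -/
def IsBorderBasis {n : ℕ} (B : Set (Fin n →₀ ℕ)) (F : Finset (PolyR n)) (t : ℕ) : Prop :=
  (∀ f ∈ F, f.totalDegree ≤ t →
      ((↑f.support : Set (Fin n →₀ ℕ)) ⊆ Bplus B ∧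
       (∃! α, α ∈ f.support ∧ α ∈ BBorder B) ∧
       ∀ α ∈ f.support, α ∈ BBorder B → coeff α f = 1)) ∧
  (∀ f ∈ F, f.totalDegree ≤ t → ∀ f' ∈ F, f'.totalDegree ≤ t →
      ∀ α, (α ∈ f.support ∧ α ∈ BBorder B) → (α ∈ f'.support ∧ α ∈ BBorder B) → f = f') ∧
  (∀ α ∈ BBorder B, degOf α ≤ t → ∃ f ∈ F, f.totalDegree ≤ t ∧ α ∈ f.support) ∧
  Disjoint (spanB B t) (FSpan F t) ∧
  spanB B t ⊔ FSpan F t = restrictTotalDegree (Fin n) ℝ t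

/-- `F` is a graded border basis for `B` in degree `t`. -/
def IsGradedBorderBasis {n : ℕ} (B : Set (Fin n →₀ ℕ)) (F : Finset (PolyR n)) (t : ℕ) : Prop :=
  IsBorderBasis B F t ∧
  ∀ f ∈ F, ∀ α ∈ f.support, α ∈ BBorder B → degOf α = f.totalDegree

lemma mul_mem_rtd {n t : ℕ} :
    ∀ p q : PolyR n, p ∈ restrictTotalDegree (Fin n) ℝ t →
      q ∈ restrictTotalDegree (Fin n) ℝ t →
      p * q ∈ restrictTotalDegree (Fin n) ℝ (2 * t) := by
  intro p q hp hq
  rw [mem_restrictTotalDegree] at hp hq ⊢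
  calc (p * q).totalDegree ≤ p.totalDegree + q.totalDegree := totalDegree_mul p q
    _ ≤ t + t := add_le_add hp hq
    _ = 2 * t := (two_mul t).symm

lemma spanB_le {n : ℕ} (B : Set (Fin n →₀ ℕ)) (t : ℕ) :
    spanB B t ≤ restrictTotalDegree (Fin n) ℝ t := by
  rw [spanB, Submodule.span_le]
  rintro p ⟨α, hα, rfl⟩
  rw [SetLike.mem_coe, mem_restrictTotalDegree]
  exact le_of_eq_of_le (totalDegree_monomial α one_ne_zero) hα.2

/-- The vanishing ideal of a finite family of points. -/
def vanishingIdeal {n r : ℕ} (ξ : Fin r → (Fin n → ℝ)) : Ideal (PolyR n) where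
  carrier := { p : PolyR n | ∀ i, eval (ξ i) p = 0 }
  add_mem' := by
    intro a b ha hb i
    simp [ha i, hb i]
  zero_mem' := by intro i; simp
  smul_mem' := by
    intro c p hp i
    simp [smul_eq_mul, hp i]


open scoped IsMulCommutative in
/-- The evaluation homomorphism at pairwise commuting elements of an algebra. -/
lemma exists_algHom_of_commute {n : ℕ} {A : Type*} [Ring A] [Algebra ℝ A] (M : Fin n → A)
    (hM : ∀ i j, M i * M j = M j * M i) : ∃ Φ : PolyR n →ₐ[ℝ] A, ∀ i, Φ (X i) = M i := by
  have : IsMulCommutative (Algebra.adjoin ℝ (Set.range M)) :=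
    Algebra.isMulCommutative_adjoin ℝ (by rintro _ ⟨i, rfl⟩ _ ⟨j, rfl⟩; exact hM i j)
  let m : Fin n → Algebra.adjoin ℝ (Set.range M) :=
    fun i => ⟨M i, Algebra.subset_adjoin ⟨i, rfl⟩⟩
  refine ⟨(Algebra.adjoin ℝ (Set.range M)).val.comp (aeval m), fun i => ?_⟩
  rw [AlgHom.comp_apply, aeval_X]
  rfl

/-- If `H ∘ f` is injective with the rank of `H`, its range is the range of `H`. -/
lemma exists_apply_eq_of_rank_eq {U M N : Type} [AddCommGroup U] [Module ℝ U]
    [FiniteDimensional ℝ U] [AddCommGroup M] [Module ℝ M] [AddCommGroup N] [Module ℝ N]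
    (H : M →ₗ[ℝ] N) (f : U →ₗ[ℝ] M) (hf : Function.Injective (H ∘ₗ f))
    (hr : Module.rank ℝ (LinearMap.range H) = Module.rank ℝ U) (p : M) :
    ∃ u, H (f u) = H p := by
  have : FiniteDimensional ℝ (LinearMap.range H) :=
    Module.rank_lt_aleph0_iff.mp (hr ▸ Module.rank_lt_aleph0 ℝ U)
  have h : LinearMap.range (H ∘ₗ f) = LinearMap.range H :=
    Submodule.eq_of_le_of_finrank_eq (LinearMap.range_comp_le_range f H) <| by
      rw [LinearMap.finrank_range_of_inj hf, Module.finrank, Module.finrank, hr]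
  have hp : H p ∈ LinearMap.range (H ∘ₗ f) := h ▸ LinearMap.mem_range_self H p
  exact hp

lemma rank_range_eq_of_exists_apply_eq {U M N : Type} [AddCommGroup U] [Module ℝ U]
    [AddCommGroup M] [Module ℝ M] [AddCommGroup N] [Module ℝ N]
    (H : M →ₗ[ℝ] N) (f : U →ₗ[ℝ] M) (hf : Function.Injective (H ∘ₗ f))
    (h : ∀ p, ∃ u, H (f u) = H p) :
    Module.rank ℝ (LinearMap.range H) = Module.rank ℝ U := by
  have h' : LinearMap.range (H ∘ₗ f) = LinearMap.range H := by
    refine le_antisymm (LinearMap.range_comp_le_range f H) ?_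
    rintro _ ⟨p, rfl⟩
    exact h p
  rw [← h', rank_range_of_injective _ hf]

lemma injective_of_rank_range_eq {U N : Type} [AddCommGroup U] [Module ℝ U]
    [FiniteDimensional ℝ U] [AddCommGroup N] [Module ℝ N] (H : U →ₗ[ℝ] N)
    (hr : Module.rank ℝ (LinearMap.range H) = Module.rank ℝ U) : Function.Injective H := by
  have h := LinearMap.finrank_range_add_finrank_ker H
  rw [Module.finrank, hr, ← Module.finrank, Nat.add_eq_left] at h
  exact LinearMap.ker_eq_bot.mp (Submodule.finrank_eq_zero.mp h)

lemma X_mul_mem_prolong {n : ℕ} {V : Submodule ℝ (PolyR n)} {p : PolyR n} (hp : p ∈ V)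
    (i : Fin n) : X i * p ∈ prolong V :=
  Submodule.mem_sup_right (Submodule.mem_iSup_of_mem i (Submodule.mem_map_of_mem hp))

lemma prolong_le {n : ℕ} {V S : Submodule ℝ (PolyR n)} (h : V ≤ S)
    (hX : ∀ i, ∀ p ∈ V, X i * p ∈ S) : prolong V ≤ S := by
  refine sup_le h (iSup_le fun i => ?_)
  rintro _ ⟨p, hp, rfl⟩
  exact hX i p hp

/-- Induction along the chain witnessing that `E` is connected to `1`. -/
lemma ConnectedTo1.le_of_X_mul_mem {n : ℕ} {E S : Submodule ℝ (PolyR n)} (hE : ConnectedTo1 E)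
    (h1 : (1 : PolyR n) ∈ S) (hX : ∀ i, ∀ p ∈ E, p ∈ S → X i * p ∈ S) : E ≤ S := by
  obtain ⟨-, k, c, h0, hk, hc⟩ := hE
  have hcE : ∀ i ≤ k, c i ≤ E := fun i hi => by
    induction hi using Nat.decreasingInduction with
    | self => exact hk.le
    | of_succ j hj ih => exact (hc j hj).1.trans ih
  have hcS : ∀ i ≤ k, c i ≤ S := fun i => by
    induction i with
    | zero => simpa [h0] using h1
    | succ i ih =>
      intro hi
      have hS := ih (by omega)
      exact (hc i hi).2.trans
        (prolong_le hS fun j p hp => hX j p (hcE i (by omega) hp) (hS hp))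
  exact hk ▸ hcS k le_rfl

lemma eq_of_forall_apply_mul_eq {n : ℕ} {V : Submodule ℝ (PolyR n)} {L : PolyR n →ₗ[ℝ] ℝ}
    (hL : ∀ v ∈ V, (∀ w ∈ V, L (v * w) = 0) → v = 0) (u w : V)
    (h : ∀ q ∈ V, L (u * q) = L (w * q)) : u = w := by
  refine Subtype.ext (sub_eq_zero.mp (hL _ (V.sub_mem u.2 w.2) fun q hq => ?_))
  rw [sub_mul, map_sub, h q hq, sub_self]

/-- The multiplication operators of `R[x]` compressed to `V` along the kernel of the truncated
Hankel form on `E`. -/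
lemma exists_compressed_action {n : ℕ} {V E : Submodule ℝ (PolyR n)} {L : PolyR n →ₗ[ℝ] ℝ}
    (hVE : V ≤ E) (hVX : ∀ i, ∀ v ∈ V, X i * v ∈ E)
    (hL : ∀ v ∈ V, (∀ w ∈ V, L (v * w) = 0) → v = 0)
    (hdec : ∀ p ∈ E, ∃ v ∈ V, ∀ q ∈ E, L (v * q) = L (p * q)) :
    ∃ Φ : PolyR n →ₐ[ℝ] Module.End ℝ V,
      ∀ i (v : V), ∀ q ∈ E, L (Φ (X i) v * q) = L (X i * (v : PolyR n) * q) := by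
  choose! π hπV hπ using hdec
  let M : Fin n → Module.End ℝ V := fun i =>
    { toFun := fun v => ⟨π (X i * (v : PolyR n)), hπV _ (hVX i v v.2)⟩
      map_add' := fun u v => eq_of_forall_apply_mul_eq hL _ _ fun q hq => by
        have := fun w : V => hπ _ (hVX i w w.2) q (hVE hq)
        rw [this]
        simp only [Submodule.coe_add, mul_add, add_mul, map_add, this]
      map_smul' := fun c v => eq_of_forall_apply_mul_eq hL _ _ fun q hq => by
        have := fun w : V => hπ _ (hVX i w w.2) q (hVE hq)
        rw [this]
        simp only [RingHom.id_apply, Submodule.coe_smul, smul_mul_assoc, mul_smul_comm,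
          map_smul, this] }
  have hM : ∀ i (v : V), ∀ q ∈ E, L (M i v * q) = L (X i * (v : PolyR n) * q) :=
    fun i v q hq => hπ _ (hVX i v v.2) q hq
  have hMM : ∀ i j (v : V), ∀ q ∈ V, L (M i (M j v) * q) = L (X i * X j * (v : PolyR n) * q) := by
    intro i j v q hq
    rw [hM _ _ _ (hVE hq), mul_right_comm, mul_comm, hM _ _ _ (hVX i q hq)]
    ring_nf
  obtain ⟨Φ, hΦ⟩ := exists_algHom_of_commute M fun i j => LinearMap.ext fun v =>
    eq_of_forall_apply_mul_eq hL _ _ fun q hq => by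
      rw [Module.End.mul_apply, Module.End.mul_apply, hMM i j v q hq, hMM j i v q hq,
        mul_comm (X i)]
  exact ⟨Φ, fun i v q hq => by rw [hΦ, hM i v q hq]⟩

section CompressedAction

variable {n : ℕ} {V E : Submodule ℝ (PolyR n)} {L : PolyR n →ₗ[ℝ] ℝ}
  {Φ : PolyR n →ₐ[ℝ] Module.End ℝ V}

/-- `Φ p` maps `1` to the projection of `p ∈ E` onto `V`. -/
lemma apply_compressed_one_mul (hEc : ConnectedTo1 E) (h1 : 1 ∈ V) (hVE : V ≤ E)
    (hVX : ∀ i, ∀ v ∈ V, X i * v ∈ E)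
    (hL : ∀ v ∈ V, (∀ w ∈ V, L (v * w) = 0) → v = 0)
    (hdec : ∀ p ∈ E, ∃ v ∈ V, ∀ q ∈ E, L (v * q) = L (p * q))
    (hΦ : ∀ i (v : V), ∀ q ∈ E, L (Φ (X i) v * q) = L (X i * (v : PolyR n) * q))
    {p q : PolyR n} (hp : p ∈ E) (hq : q ∈ E) : L (Φ p ⟨1, h1⟩ * q) = L (p * q) := by
  have hext : ∀ p ∈ E, (∀ q ∈ V, L (Φ p ⟨1, h1⟩ * q) = L (p * q)) →
      ∀ q ∈ E, L (Φ p ⟨1, h1⟩ * q) = L (p * q) := by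
    intro p hp h q hq
    obtain ⟨v, hv, hvp⟩ := hdec p hp
    have : Φ p ⟨1, h1⟩ = ⟨v, hv⟩ := eq_of_forall_apply_mul_eq hL _ _ fun w hw => by
      rw [h w hw, hvp w (hVE hw)]
    rw [this, hvp q hq]
  let S : Submodule ℝ (PolyR n) :=
    { carrier := {p | ∀ q ∈ V, L (Φ p ⟨1, h1⟩ * q) = L (p * q)}
      zero_mem' := fun q _ => by simp
      add_mem' := fun {a b} ha hb q hq => by
        simp [add_mul, ha q hq, hb q hq]
      smul_mem' := fun c a ha q hq => by
        simp [ha q hq] }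
  refine hext p hp (hEc.le_of_X_mul_mem (S := S) (fun q _ => by simp) ?_ hp) q hq
  intro i p hp hpS q hq
  rw [map_mul Φ, Module.End.mul_apply, hΦ _ _ _ (hVE hq), mul_right_comm, mul_comm,
    hext p hp hpS _ (hVX i q hq)]
  ring_nf

lemma apply_compressed (hEc : ConnectedTo1 E)
    (hΦ : ∀ i (v : V), ∀ q ∈ E, L (Φ (X i) v * q) = L (X i * (v : PolyR n) * q))
    {p : PolyR n} (hp : p ∈ E) (v : V) : L (Φ p v) = L (p * v) := by
  let S : Submodule ℝ (PolyR n) :=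
    { carrier := {p | ∀ v : V, L (Φ p v) = L (p * v)}
      zero_mem' := fun q => by simp
      add_mem' := fun {a b} ha hb q => by
        simp [add_mul, ha q, hb q]
      smul_mem' := fun c a ha q => by
        simp [ha q] }
  refine hEc.le_of_X_mul_mem (S := S) (fun q => by simp) ?_ hp v
  intro i p hp hpS v
  rw [mul_comm, map_mul Φ, Module.End.mul_apply, hpS, mul_comm p, hΦ i v p hp]
  ring_nf

end CompressedAction

lemma FullHankel_apply {n : ℕ} (Λ : PolyR n →ₗ[ℝ] ℝ) (p q : PolyR n) :
    FullHankel Λ p q = Λ (p * q) := rfl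

/-- A linear form that is non-degenerate on `V` and for which `E` splits as `V` plus the kernel
of the truncated Hankel operator has a flat extension. -/
lemma exists_flat_extension {n : ℕ} {V E : Submodule ℝ (PolyR n)} {L : PolyR n →ₗ[ℝ] ℝ}
    (hEc : ConnectedTo1 E) (h1 : 1 ∈ V) (hVE : V ≤ E)
    (hVX : ∀ i, ∀ v ∈ V, X i * v ∈ E)
    (hL : ∀ v ∈ V, (∀ w ∈ V, L (v * w) = 0) → v = 0)
    (hdec : ∀ p ∈ E, ∃ v ∈ V, ∀ q ∈ E, L (v * q) = L (p * q)) :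
    ∃ Λt : PolyR n →ₗ[ℝ] ℝ, (∀ p ∈ spanEE E, Λt p = L p) ∧
      Module.rank ℝ (LinearMap.range (FullHankel Λt)) = Module.rank ℝ V := by
  obtain ⟨Φ, hΦ⟩ := exists_compressed_action hVE hVX hL hdec
  let Λt : PolyR n →ₗ[ℝ] ℝ :=
    L ∘ₗ V.subtype ∘ₗ LinearMap.applyₗ (⟨1, h1⟩ : V) ∘ₗ Φ.toLinearMap
  have hΛt : ∀ p, Λt p = L (Φ p ⟨1, h1⟩) := fun p => rfl
  have hmul : ∀ p ∈ E, ∀ q ∈ E, Λt (p * q) = L (p * q) := by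
    intro p hp q hq
    rw [hΛt, map_mul Φ, Module.End.mul_apply, apply_compressed hEc hΦ hp, mul_comm,
      apply_compressed_one_mul hEc h1 hVE hVX hL hdec hΦ hq hp, mul_comm]
  have hone : ∀ v : V, Φ v ⟨1, h1⟩ = v := fun v =>
    eq_of_forall_apply_mul_eq hL _ _ fun q hq =>
      apply_compressed_one_mul hEc h1 hVE hVX hL hdec hΦ (hVE v.2) (hVE hq)
  refine ⟨Λt, fun p hp => ?_, rank_range_eq_of_exists_apply_eq _ V.subtype ?_ fun p =>
    ⟨Φ p ⟨1, h1⟩, LinearMap.ext fun q => ?_⟩⟩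
  · refine LinearMap.eqOn_span (f := Λt) (g := L) ?_ hp
    rintro _ ⟨p, hp, q, hq, rfl⟩
    exact hmul p hp q hq
  · intro u v huv
    refine eq_of_forall_apply_mul_eq hL _ _ fun q hq => ?_
    rw [← hmul u (hVE u.2) q (hVE hq), ← hmul v (hVE v.2) q (hVE hq)]
    exact LinearMap.congr_fun huv q
  · rw [FullHankel_apply, FullHankel_apply, mul_comm, mul_comm p, hΛt, hΛt, map_mul Φ, map_mul Φ,
      Module.End.mul_apply, Module.End.mul_apply, Submodule.subtype_apply, hone]

/-- If `E = V + K` and `E` contains the prolongation of `V`, then `V` spans `R[x]` modulo the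
ideal generated by `K`. -/
lemma exists_sub_mem_ideal_span {n : ℕ} {V E K : Submodule ℝ (PolyR n)} (h1 : 1 ∈ V)
    (hVX : ∀ i, ∀ v ∈ V, X i * v ∈ E) (hdec : ∀ p ∈ E, ∃ v ∈ V, p - v ∈ K) (p : PolyR n) :
    ∃ v ∈ V, p - v ∈ Ideal.span (K : Set (PolyR n)) := by
  induction p using MvPolynomial.induction_on with
  | C a => exact ⟨C a, by simpa [← C_mul', smul_eq_mul] using V.smul_mem a h1, by simp⟩
  | add p q hp hq =>
    obtain ⟨u, hu, hpu⟩ := hp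
    obtain ⟨v, hv, hqv⟩ := hq
    exact ⟨u + v, V.add_mem hu hv, by
      rw [add_sub_add_comm]
      exact Ideal.add_mem _ hpu hqv⟩
  | mul_X p i hp =>
    obtain ⟨u, hu, hpu⟩ := hp
    obtain ⟨v, hv, huv⟩ := hdec _ (hVX i u hu)
    refine ⟨v, hv, ?_⟩
    have : p * X i - v = X i * (p - u) + (X i * u - v) := by ring
    rw [this]
    exact Ideal.add_mem _ (Ideal.mul_mem_left _ _ hpu) (Ideal.subset_span huv)

/-- The kernel of a flat extension is generated by the kernel of the truncated form. -/
lemma ker_FullHankel_eq_ideal_span {n : ℕ} {V E K : Submodule ℝ (PolyR n)}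
    [FiniteDimensional ℝ V] (h1 : 1 ∈ V) (hVX : ∀ i, ∀ v ∈ V, X i * v ∈ E)
    {Λt : PolyR n →ₗ[ℝ] ℝ}
    (hL : ∀ v ∈ V, (∀ w ∈ V, Λt (v * w) = 0) → v = 0)
    (hK : ∀ k ∈ K, ∀ w ∈ V, Λt (k * w) = 0) (hdec : ∀ p ∈ E, ∃ v ∈ V, p - v ∈ K)
    (hr : Module.rank ℝ (LinearMap.range (FullHankel Λt)) = Module.rank ℝ V) :
    (LinearMap.ker (FullHankel Λt) : Set (PolyR n)) = Ideal.span (K : Set (PolyR n)) := by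
  let I : Ideal (PolyR n) :=
    { LinearMap.ker (FullHankel Λt) with
      smul_mem' := fun c p hp => LinearMap.ext fun q => by
        rw [smul_eq_mul, FullHankel_apply, mul_comm c, mul_assoc]
        exact LinearMap.congr_fun hp (c * q) }
  have hI : ∀ p, p ∈ I ↔ ∀ q, Λt (p * q) = 0 := fun p =>
    ⟨fun hp q => LinearMap.congr_fun hp q, fun h => LinearMap.ext h⟩
  have hVI : ∀ v ∈ V, v ∈ I → v = 0 := fun v hv hvI => hL v hv fun w _ => (hI v).mp hvI w
  have hsplit := exists_apply_eq_of_rank_eq (FullHankel Λt) V.subtype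
    (fun u v huv => eq_of_forall_apply_mul_eq hL _ _ fun q _ => LinearMap.congr_fun huv q) hr
  have hKI : Ideal.span (K : Set (PolyR n)) ≤ I := by
    refine Ideal.span_le.mpr fun k hk => ?_
    obtain ⟨v, hv⟩ := hsplit k
    have hv' : ∀ q, Λt (v * q) = Λt (k * q) := fun q => LinearMap.congr_fun hv q
    have hv0 : (v : PolyR n) = 0 := hL v v.2 fun w hw => by rw [hv', hK k hk w hw]
    exact (hI k).mpr fun q => by rw [← hv', hv0, zero_mul, map_zero]
  change (I : Set (PolyR n)) = _
  refine Set.Subset.antisymm (fun p hp => ?_) hKI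
  obtain ⟨v, hv, hpv⟩ := exists_sub_mem_ideal_span h1 hVX hdec p
  have hvI : v ∈ I := by simpa using I.sub_mem hp (hKI hpv)
  simpa [hVI v hv hvI] using hpv

theorem statement_12 {n : ℕ} (V E : Submodule ℝ (PolyR n))
    (hVfin : FiniteDimensional ℝ ↥V) (hEfin : FiniteDimensional ℝ ↥E)
    (hVc : ConnectedTo1 V) (hEc : ConnectedTo1 E)
    (hVE : V ≤ E) (hVp : prolong V ≤ E)
    (Λ : ↥(spanEE E) →ₗ[ℝ] ℝ)
    (hrank1 : HRank (spanEE E) E Λ mul_mem_spanEE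
        = HRank (spanEE E) V Λ (fun p q hp hq => mul_mem_spanEE p q (hVE hp) (hVE hq)))
    (hrank2 : HRank (spanEE E) V Λ (fun p q hp hq => mul_mem_spanEE p q (hVE hp) (hVE hq))
        = Module.rank ℝ ↥V) :
    (∃! Λt : PolyR n →ₗ[ℝ] ℝ,
        (∀ (p : PolyR n) (hp : p ∈ spanEE E), Λt p = Λ ⟨p, hp⟩) ∧
        Module.rank ℝ ↥(LinearMap.range (FullHankel Λt))
          = HRank (spanEE E) E Λ mul_mem_spanEE) ∧
    ∀ Λt : PolyR n →ₗ[ℝ] ℝ,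
      (∀ (p : PolyR n) (hp : p ∈ spanEE E), Λt p = Λ ⟨p, hp⟩) →
      Module.rank ℝ ↥(LinearMap.range (FullHankel Λt))
          = HRank (spanEE E) E Λ mul_mem_spanEE →
      (LinearMap.ker (FullHankel Λt) : Set (PolyR n))
        = ↑(Ideal.span (↑(HKer (spanEE E) E Λ mul_mem_spanEE) : Set (PolyR n))) := by
  obtain ⟨L, hLΛ⟩ := Λ.exists_extend
  have hLE : ∀ p (hp : p ∈ spanEE E), L p = Λ ⟨p, hp⟩ := fun p hp =>
    LinearMap.congr_fun hLΛ ⟨p, hp⟩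
  have h1 : 1 ∈ V := hVc.1
  have hVX : ∀ i, ∀ v ∈ V, X i * v ∈ E := fun i v hv => hVp (X_mul_mem_prolong hv i)
  have hLV : ∀ v ∈ V, (∀ w ∈ V, L (v * w) = 0) → v = 0 := fun v hv h => by
    have hinj := injective_of_rank_range_eq _ hrank2
    refine congrArg Subtype.val (@hinj ⟨v, hv⟩ 0 ?_)
    rw [map_zero]
    exact LinearMap.ext fun w =>
      (hLE _ (mul_mem_spanEE _ _ (hVE hv) (hVE w.2))).symm.trans (h w w.2)
  have hHankel : ∀ p q : E, Hankel (spanEE E) E Λ mul_mem_spanEE p q = L (p * q) := fun p q =>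
    (hLE _ (mul_mem_spanEE _ _ p.2 q.2)).symm
  have hsplit := exists_apply_eq_of_rank_eq (Hankel (spanEE E) E Λ mul_mem_spanEE)
    (Submodule.inclusion hVE)
    (fun u v huv => eq_of_forall_apply_mul_eq hLV _ _ fun q hq => by
      have := LinearMap.congr_fun huv ⟨q, hVE hq⟩
      simpa only [LinearMap.comp_apply, hHankel, Submodule.coe_inclusion] using this)
    (hrank1.trans hrank2)
  have hdec : ∀ p ∈ E, ∃ v ∈ V, ∀ q ∈ E, L (v * q) = L (p * q) := fun p hp => by
    obtain ⟨v, hv⟩ := hsplit ⟨p, hp⟩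
    refine ⟨v, v.2, fun q hq => ?_⟩
    have := LinearMap.congr_fun hv ⟨q, hq⟩
    simpa only [hHankel, Submodule.coe_inclusion] using this
  have hdecK : ∀ p ∈ E, ∃ v ∈ V, p - v ∈ HKer (spanEE E) E Λ mul_mem_spanEE := fun p hp => by
    obtain ⟨v, hv⟩ := hsplit ⟨p, hp⟩
    refine ⟨v, v.2, Submodule.mem_map.mpr ⟨⟨p, hp⟩ - Submodule.inclusion hVE v, ?_, rfl⟩⟩
    rw [LinearMap.mem_ker, map_sub, hv, sub_self]
  have hK : ∀ k ∈ HKer (spanEE E) E Λ mul_mem_spanEE, ∀ w ∈ E, L (k * w) = 0 := by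
    rintro _ ⟨k, hk, rfl⟩ w hw
    exact (hHankel k ⟨w, hw⟩).symm.trans (LinearMap.congr_fun (LinearMap.mem_ker.mp hk) _)
  have hker : ∀ Λt : PolyR n →ₗ[ℝ] ℝ, (∀ (p : PolyR n) (hp : p ∈ spanEE E), Λt p = Λ ⟨p, hp⟩) →
      Module.rank ℝ ↥(LinearMap.range (FullHankel Λt))
          = HRank (spanEE E) E Λ mul_mem_spanEE →
      (LinearMap.ker (FullHankel Λt) : Set (PolyR n))
        = ↑(Ideal.span (↑(HKer (spanEE E) E Λ mul_mem_spanEE) : Set (PolyR n))) := by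
    intro Λt hext hr
    have hmul : ∀ p ∈ E, ∀ q ∈ E, Λt (p * q) = L (p * q) := fun p hp q hq => by
      rw [hext _ (mul_mem_spanEE _ _ hp hq), hLE]
    refine ker_FullHankel_eq_ideal_span h1 hVX (fun v hv h => hLV v hv fun w hw => ?_)
      (fun k hk w hw => ?_) hdecK (hr.trans (hrank1.trans hrank2))
    · rw [← hmul v (hVE hv) w (hVE hw), h w hw]
    · rw [hmul k (Submodule.map_subtype_le _ _ hk) w (hVE hw), hK k hk w (hVE hw)]
  refine ⟨?_, hker⟩
  obtain ⟨Λ₀, hext₀, hr₀⟩ := exists_flat_extension hEc h1 hVE hVX hLV hdec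
  have hext₀' : ∀ (p : PolyR n) (hp : p ∈ spanEE E), Λ₀ p = Λ ⟨p, hp⟩ := fun p hp =>
    (hext₀ p hp).trans (hLE p hp)
  have hr₀' := hr₀.trans (hrank1.trans hrank2).symm
  refine ⟨Λ₀, ⟨hext₀', hr₀'⟩, ?_⟩
  rintro Λ₁ ⟨hext₁, hr₁⟩
  refine LinearMap.ext fun p => ?_
  obtain ⟨v, hv, hpv⟩ := exists_sub_mem_ideal_span h1 hVX hdecK p
  have hred : ∀ Λt : PolyR n →ₗ[ℝ] ℝ,
      (∀ (p : PolyR n) (hp : p ∈ spanEE E), Λt p = Λ ⟨p, hp⟩) →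
      Module.rank ℝ ↥(LinearMap.range (FullHankel Λt))
          = HRank (spanEE E) E Λ mul_mem_spanEE → Λt p = L v := by
    intro Λt hext hr
    have hmem : p - v ∈ (LinearMap.ker (FullHankel Λt) : Set (PolyR n)) := by
      rw [hker Λt hext hr]
      exact hpv
    have h0 : Λt ((p - v) * 1) = 0 := LinearMap.congr_fun (LinearMap.mem_ker.mp hmem) 1
    have hvE : v ∈ spanEE E := by simpa using mul_mem_spanEE v 1 (hVE hv) (hVE h1)
    rw [mul_one, map_sub, sub_eq_zero] at h0
    rw [h0, hext v hvE, hLE v hvE]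
  rw [hred Λ₁ hext₁ hr₁, hred Λ₀ hext₀' hr₀']

end
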